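/- Let G be a connected finite simple graph with γ_{1/2}(G) = 3. Then for every integer m ≥ 2, γ_{1/2}(G □ P_m) ≥ 3·γ_{1/2}(P_m). -/

import Mathlib

/-!
Write `n = |V|`. No two vertices dominate half of `G`, and a vertex outside `N[u]` can always be
dominated by adding it to `{u}`; hence `2 |N[u]| + 3 ≤ n` for every `u`, and in particular `5 ≤ n`.
A vertex `(u, i)` of `G □ P_m` dominates `|N[u]| + deg i ≤ (n + 1) / 2` vertices, so the size `s` of
a half-dominating set satisfies `m n ≤ s (n + 1)`, and therefore `5 m ≤ 6 s`. Since
`γ_{1/2}(P_m) ≤ ⌈m / 6⌉`, this suffices for `7 ≤ m`. For `1 ≤ m ≤ 6` the bound is `3 ≤ s`, which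
holds because a half-dominating set of `G □ P_m` projects to one of `G`.
-/

open SimpleGraph

/-- The closed neighborhood `N[S]` of a set of vertices `S`:
all vertices equal or adjacent to some vertex of `S`. -/
def closedNbhd {V : Type*} (G : SimpleGraph V) (S : Set V) : Set V :=
  {w | ∃ u ∈ S, w = u ∨ G.Adj u w}

/-- `S` is a `p`-dominating set of `G` if `N[S]` contains at least a proportion `p`
of the vertices. -/
def IsPDomSet {V : Type*} [Fintype V] (G : SimpleGraph V) (p : ℝ) (S : Set V) : Prop :=
  p * (Fintype.card V : ℝ) ≤ ((closedNbhd G S).ncard : ℝ)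

/-- The `p`-domination number `γ_p(G)`: the minimum cardinality of a `p`-dominating set. -/
noncomputable def pDomNum {V : Type*} [Fintype V] (G : SimpleGraph V) (p : ℝ) : ℕ :=
  sInf {k : ℕ | ∃ S : Set V, IsPDomSet G p S ∧ S.ncard = k}

/-- `S` is a `γ_p`-set: a `p`-dominating set of minimum cardinality `γ_p(G)`. -/
def IsGammaPSet {V : Type*} [Fintype V] (G : SimpleGraph V) (p : ℝ) (S : Set V) : Prop :=
  IsPDomSet G p S ∧ S.ncard = pDomNum G p

/-- `v` belongs to the `p`-influencing set of `G`, i.e. the union of all `γ_p`-sets. -/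
def InInfluence {V : Type*} [Fintype V] (G : SimpleGraph V) (p : ℝ) (v : V) : Prop :=
  ∃ S : Set V, IsGammaPSet G p S ∧ v ∈ S

section ClosedNbhd

variable {V W : Type*}

lemma subset_closedNbhd (G : SimpleGraph V) (S : Set V) : S ⊆ closedNbhd G S :=
  fun u hu ↦ ⟨u, hu, Or.inl rfl⟩

lemma closedNbhd_mono (G : SimpleGraph V) {S T : Set V} (hST : S ⊆ T) :
    closedNbhd G S ⊆ closedNbhd G T :=
  fun _ ⟨u, hu, huw⟩ ↦ ⟨u, hST hu, huw⟩

lemma closedNbhd_singleton (G : SimpleGraph V) (u : V) :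
    closedNbhd G {u} = insert u (G.neighborSet u) := by
  ext w
  simp [closedNbhd]

lemma closedNbhd_eq_biUnion (G : SimpleGraph V) (S : Set V) :
    closedNbhd G S = ⋃ u ∈ S, closedNbhd G {u} := by
  ext w
  simp [closedNbhd]

lemma closedNbhd_boxProd_singleton (G : SimpleGraph V) (H : SimpleGraph W) (x : V × W) :
    closedNbhd (G □ H) {x} =
      closedNbhd G {x.1} ×ˢ {x.2} ∪ {x.1} ×ˢ H.neighborSet x.2 := by
  rw [closedNbhd_singleton, closedNbhd_singleton, neighborSet_boxProd, Set.insert_prod,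
    Set.image_singleton, Set.union_assoc, Set.singleton_union]

lemma ncard_closedNbhd_boxProd_singleton_le (G : SimpleGraph V) (H : SimpleGraph W) (x : V × W) :
    (closedNbhd (G □ H) {x}).ncard ≤
      (closedNbhd G {x.1}).ncard + (H.neighborSet x.2).ncard := by
  rw [closedNbhd_boxProd_singleton]
  refine (Set.ncard_union_le _ _).trans_eq ?_
  simp only [Set.ncard_prod, Set.ncard_singleton, mul_one, one_mul]

lemma closedNbhd_boxProd_subset (G : SimpleGraph V) (H : SimpleGraph W) (S : Set (V × W)) :
    closedNbhd (G □ H) S ⊆ closedNbhd G (Prod.fst '' S) ×ˢ Set.univ := by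
  rintro w ⟨x, hx, hxw⟩
  refine ⟨⟨x.1, Set.mem_image_of_mem _ hx, ?_⟩, Set.mem_univ _⟩
  rcases hxw with rfl | hadj
  · exact Or.inl rfl
  · rcases boxProd_adj.1 hadj with ⟨hG, -⟩ | ⟨-, hfst⟩
    · exact Or.inr hG
    · exact Or.inl hfst.symm

end ClosedNbhd

section PDomNum

variable {V W : Type*} [Fintype V] [Fintype W] {p : ℝ}

lemma IsPDomSet.pDomNum_le_ncard {G : SimpleGraph V} {S : Set V} (hS : IsPDomSet G p S) :
    pDomNum G p ≤ S.ncard :=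
  Nat.sInf_le ⟨S, hS, rfl⟩

lemma isPDomSet_univ (G : SimpleGraph V) (hp : p ≤ 1) : IsPDomSet G p Set.univ := by
  rw [IsPDomSet, Set.univ_subset_iff.1 (subset_closedNbhd G Set.univ), Set.ncard_univ,
    Nat.card_eq_fintype_card]
  exact mul_le_of_le_one_left (Nat.cast_nonneg _) hp

lemma exists_isGammaPSet (G : SimpleGraph V) (hp : p ≤ 1) : ∃ S, IsGammaPSet G p S :=
  Nat.sInf_mem (s := {k | ∃ S, IsPDomSet G p S ∧ S.ncard = k})
    ⟨_, Set.univ, isPDomSet_univ G hp, rfl⟩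

lemma pDomNum_le_ncard_add {G : SimpleGraph V} {S : Set V} {k : ℕ} (hp : p ≤ 1)
    (hS : p * Fintype.card V ≤ (closedNbhd G S).ncard + k) : pDomNum G p ≤ S.ncard + k := by
  obtain ⟨T, hTS, hT⟩ := Set.exists_subset_card_eq (min_le_right k (closedNbhd G S)ᶜ.ncard)
  have hsub : closedNbhd G S ∪ T ⊆ closedNbhd G (S ∪ T) :=
    Set.union_subset (closedNbhd_mono G Set.subset_union_left)
      (Set.subset_union_right.trans (subset_closedNbhd G _))
  have hcard : (closedNbhd G S).ncard + T.ncard ≤ (closedNbhd G (S ∪ T)).ncard := by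
    rw [← Set.ncard_union_eq (Set.subset_compl_iff_disjoint_left.1 hTS)]
    exact Set.ncard_le_ncard hsub
  have hdom : IsPDomSet G p (S ∪ T) := by
    refine le_trans ?_ (Nat.cast_le.2 hcard)
    rw [hT, ← min_add_add_left, Set.ncard_add_ncard_compl, Nat.card_eq_fintype_card,
      Nat.cast_min, Nat.cast_add]
    exact le_min hS (mul_le_of_le_one_left (Nat.cast_nonneg _) hp)
  calc pDomNum G p ≤ (S ∪ T).ncard := hdom.pDomNum_le_ncard
    _ ≤ S.ncard + T.ncard := Set.ncard_union_le S T
    _ ≤ S.ncard + k := by grw [hT, min_le_left]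

lemma mul_card_le_pDomNum_mul {G : SimpleGraph V} {b : ℝ} (hp : p ≤ 1)
    (hb : ∀ u, ((closedNbhd G {u}).ncard : ℝ) ≤ b) :
    p * Fintype.card V ≤ pDomNum G p * b := by
  classical
  obtain ⟨S, hS, hcard⟩ := exists_isGammaPSet G hp
  have hunion : (closedNbhd G S).ncard ≤ ∑ u ∈ S.toFinset, (closedNbhd G {u}).ncard := by
    rw [closedNbhd_eq_biUnion]
    simpa only [Set.mem_toFinset] using
      S.toFinset.set_ncard_biUnion_le fun u ↦ closedNbhd G {u}
  calc p * Fintype.card V ≤ (closedNbhd G S).ncard := hS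
    _ ≤ ∑ u ∈ S.toFinset, ((closedNbhd G {u}).ncard : ℝ) := mod_cast hunion
    _ ≤ S.toFinset.card • b := Finset.sum_le_card_nsmul _ _ _ fun u _ ↦ hb u
    _ = pDomNum G p * b := by rw [← Set.ncard_eq_toFinset_card', hcard, nsmul_eq_mul]

lemma pDomNum_le_pDomNum_boxProd [Nonempty W] (G : SimpleGraph V) (H : SimpleGraph W)
    (hp : p ≤ 1) : pDomNum G p ≤ pDomNum (G □ H) p := by
  obtain ⟨S, hS, hcard⟩ := exists_isGammaPSet (G □ H) hp
  have hproj : (closedNbhd (G □ H) S).ncard ≤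
      (closedNbhd G (Prod.fst '' S)).ncard * Fintype.card W := by
    rw [← Nat.card_eq_fintype_card, ← Set.ncard_univ, ← Set.ncard_prod]
    exact Set.ncard_le_ncard (closedNbhd_boxProd_subset G H S)
  have hdom : IsPDomSet G p (Prod.fst '' S) := by
    have hW : (0 : ℝ) < Fintype.card W := mod_cast Fintype.card_pos
    refine le_of_mul_le_mul_right ?_ hW
    calc p * Fintype.card V * Fintype.card W = p * Fintype.card (V × W) := by
          rw [Fintype.card_prod, Nat.cast_mul, mul_assoc]
      _ ≤ (closedNbhd (G □ H) S).ncard := hS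
      _ ≤ (closedNbhd G (Prod.fst '' S)).ncard * Fintype.card W := mod_cast hproj
  calc pDomNum G p ≤ (Prod.fst '' S).ncard := hdom.pDomNum_le_ncard
    _ ≤ S.ncard := Set.ncard_image_le
    _ = pDomNum (G □ H) p := hcard

end PDomNum

section HalfDomination

variable {V W : Type*} [Fintype V] [Fintype W] {G : SimpleGraph V} {H : SimpleGraph W}

lemma two_mul_ncard_closedNbhd_lt_card {S : Set V} {k : ℕ}
    (hG : S.ncard + k < pDomNum G (1 / 2)) :
    2 * ((closedNbhd G S).ncard + k) < Fintype.card V := by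
  have hlt : ((closedNbhd G S).ncard + k : ℝ) < 1 / 2 * Fintype.card V := by
    by_contra! hle
    exact hG.not_ge (pDomNum_le_ncard_add (by norm_num) hle)
  have : (2 * ((closedNbhd G S).ncard + k) : ℝ) < Fintype.card V := by linarith
  exact_mod_cast this

lemma card_mul_card_add_le_pDomNum_boxProd_mul {k d : ℕ} (hG : k + 1 < pDomNum G (1 / 2))
    (hH : ∀ i, (H.neighborSet i).ncard ≤ d) :
    Fintype.card V * Fintype.card W + pDomNum (G □ H) (1 / 2) * (2 * k + 1) ≤
      pDomNum (G □ H) (1 / 2) * (Fintype.card V + 2 * d) := by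
  have hnbhd (x : V × W) : ((closedNbhd (G □ H) {x}).ncard : ℝ) ≤
      (Fintype.card V + 2 * d - (2 * k + 1)) / 2 := by
    have hbox := ncard_closedNbhd_boxProd_singleton_le G H x
    have hfst : 2 * ((closedNbhd G {x.1}).ncard + k) < Fintype.card V :=
      two_mul_ncard_closedNbhd_lt_card (by rw [Set.ncard_singleton]; omega)
    have hsnd := hH x.2
    rw [le_div_iff₀ two_pos, le_sub_iff_add_le]
    norm_cast
    omega
  have hmul := mul_card_le_pDomNum_mul (p := 1 / 2) (by norm_num) hnbhd
  rw [Fintype.card_prod, Nat.cast_mul] at hmul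
  rify
  linarith

lemma three_mul_ceil_card_div_six_le_pDomNum_boxProd (hG : 3 ≤ pDomNum G (1 / 2))
    (hH : ∀ i, (H.neighborSet i).ncard ≤ 2) :
    3 * ((Fintype.card W + 5) / 6) ≤ pDomNum (G □ H) (1 / 2) := by
  rcases isEmpty_or_nonempty W with hW | hW
  · simp
  rcases le_or_gt (Fintype.card W) 6 with hsmall | hlarge
  · have := pDomNum_le_pDomNum_boxProd G H (p := 1 / 2) (by norm_num)
    omega
  · have hcard : 5 ≤ Fintype.card V := by
      have : 2 * ((closedNbhd G ∅).ncard + 2) < Fintype.card V :=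
        two_mul_ncard_closedNbhd_lt_card (by rwa [Set.ncard_empty])
      omega
    have hmul := card_mul_card_add_le_pDomNum_boxProd_mul (k := 1) hG hH
    have hratio : 5 * Fintype.card W ≤ 6 * pDomNum (G □ H) (1 / 2) := by
      by_contra! hlt
      nlinarith
    omega

end HalfDomination

section PathGraph

lemma ncard_neighborSet_pathGraph_le_two {m : ℕ} (i : Fin m) :
    ((pathGraph m).neighborSet i).ncard ≤ 2 := by
  have hmaps : ∀ j ∈ (pathGraph m).neighborSet i, j.val ∈ ({i.val - 1, i.val + 1} : Set ℕ) := by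
    intro j hj
    rw [mem_neighborSet, pathGraph_adj] at hj
    rw [Set.mem_insert_iff, Set.mem_singleton_iff]
    omega
  calc ((pathGraph m).neighborSet i).ncard ≤ ({i.val - 1, i.val + 1} : Set ℕ).ncard :=
        Set.ncard_le_ncard_of_injOn _ hmaps Fin.val_injective.injOn
    _ ≤ ({i.val + 1} : Set ℕ).ncard + 1 := Set.ncard_insert_le _ _
    _ = 2 := by rw [Set.ncard_singleton]

lemma exists_ncard_le_and_min_le_ncard_closedNbhd_pathGraph (m k : ℕ) :
    ∃ S : Set (Fin m), S.ncard ≤ k ∧ min (3 * k) m ≤ (closedNbhd (pathGraph m) S).ncard := by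
  -- The vertices `1, 4, 7, …`, the last of them moved to the end of the path if it falls outside.
  let center (j : ℕ) : ℕ := min (3 * j + 1) (m - 1)
  let S : Set (Fin m) := Fin.val ⁻¹' (center '' Set.Iio k)
  refine ⟨S, ?_, ?_⟩
  · calc S.ncard ≤ (center '' Set.Iio k).ncard :=
          Set.ncard_le_ncard_of_injOn Fin.val (fun _ hi ↦ hi) Fin.val_injective.injOn
            ((Set.finite_Iio k).image center)
      _ ≤ (Set.Iio k).ncard := Set.ncard_image_le (Set.finite_Iio k)
      _ = k := Set.ncard_Iio_nat k
  · have hinit : Set.Iio (min (3 * k) m) ⊆ Fin.val '' closedNbhd (pathGraph m) S := by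
      intro i hi
      rw [Set.mem_Iio, lt_min_iff] at hi
      have hcenter : center (i / 3) < m := (min_le_right _ _).trans_lt (by omega)
      refine ⟨⟨i, hi.2⟩, ⟨⟨center (i / 3), hcenter⟩, ?_, ?_⟩, rfl⟩
      · exact Set.mem_image_of_mem center (Set.mem_Iio.2 (by omega))
      · rw [pathGraph_adj, Fin.ext_iff]
        dsimp only [center]
        omega
    calc min (3 * k) m = (Set.Iio (min (3 * k) m)).ncard := (Set.ncard_Iio_nat _).symm
      _ ≤ (Fin.val '' closedNbhd (pathGraph m) S).ncard := Set.ncard_le_ncard hinit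
      _ = (closedNbhd (pathGraph m) S).ncard := Set.ncard_image_of_injective _ Fin.val_injective

lemma pDomNum_pathGraph_le {m k : ℕ} {p : ℝ} (hp : p ≤ 1) (hk : p * m ≤ 3 * k) :
    pDomNum (pathGraph m) p ≤ k := by
  obtain ⟨S, hcard, hdom⟩ := exists_ncard_le_and_min_le_ncard_closedNbhd_pathGraph m k
  have hS : IsPDomSet (pathGraph m) p S :=
    calc p * Fintype.card (Fin m) = p * m := by rw [Fintype.card_fin]
      _ ≤ min (3 * k : ℝ) m := le_min hk (mul_le_of_le_one_left (Nat.cast_nonneg _) hp)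
      _ ≤ (closedNbhd (pathGraph m) S).ncard := mod_cast hdom
  exact hS.pDomNum_le_ncard.trans hcard

lemma pDomNum_half_pathGraph_le (m : ℕ) : pDomNum (pathGraph m) (1 / 2) ≤ (m + 5) / 6 := by
  refine pDomNum_pathGraph_le (by norm_num) ?_
  have hceil : (m : ℝ) ≤ 6 * ((m + 5) / 6 : ℕ) := mod_cast (by omega : m ≤ 6 * ((m + 5) / 6))
  linarith

end PathGraph

theorem stmt6_general {V : Type*} [Fintype V] (G : SimpleGraph V)
    (hG : 3 ≤ pDomNum G (1 / 2)) (m : ℕ) :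
    3 * pDomNum (pathGraph m) (1 / 2) ≤ pDomNum (G □ pathGraph m) (1 / 2) :=
  calc 3 * pDomNum (pathGraph m) (1 / 2) ≤ 3 * ((Fintype.card (Fin m) + 5) / 6) := by
        grw [pDomNum_half_pathGraph_le, Fintype.card_fin]
    _ ≤ pDomNum (G □ pathGraph m) (1 / 2) :=
        three_mul_ceil_card_div_six_le_pDomNum_boxProd hG ncard_neighborSet_pathGraph_le_two

theorem stmt6 {V : Type*} [Fintype V] (G : SimpleGraph V) (hconn : G.Connected)
    (hG : pDomNum G (1/2) = 3) (m : ℕ) (hm : 2 ≤ m) :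
    3 * pDomNum (pathGraph m) (1/2) ≤ pDomNum (G □ pathGraph m) (1/2) := by
  exact stmt6_general G hG.ge m
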